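/- Let b ∈ ℂ, φ ≡ b constant, and ψ a non-zero entire function with C_{ψ,φ} bounded on F². Then C_{ψ,φ} is the rank-one operator f ↦ ⟨f, K_b⟩ ψ, and 0 ∈ W(C_{ψ,φ}). Specifically: (a) if K_b = (c/‖ψ‖²)ψ for some nonzero c, then W(C_{ψ,φ}) is the closed segment from 0 to conj(c); (b) if K_b ⊥ ψ, then W(C_{ψ,φ}) is the closed disk centered at 0 with radius (‖ψ‖/2)e^{|b|²/2}; (c) otherwise W(C_{ψ,φ}) is a closed filled ellipse with foci 0 and ψ(b). -/

import Mathlib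

open MeasureTheory Complex

/-- The Gaussian measure `π⁻¹ e^{-|z|²} dA(z)` on `ℂ`. -/
noncomputable def gaussMeasure : Measure ℂ :=
  (volume : Measure ℂ).withDensity fun z => ENNReal.ofReal (Real.exp (-(‖z‖ ^ 2)) / Real.pi)

/-- A function is entire if it is differentiable on all of `ℂ`. -/
def Entire (f : ℂ → ℂ) : Prop := Differentiable ℂ f

/-- The squared Fock-space norm `∫ |f|² dμ`. -/
noncomputable def fockNormSq (f : ℂ → ℂ) : ℝ := ∫ z, ‖f z‖ ^ 2 ∂gaussMeasure

/-- Membership in the Fock space `F²`: entire and square integrable w.r.t. the Gaussian. -/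
def MemFock (f : ℂ → ℂ) : Prop :=
  Entire f ∧ Integrable (fun z => ‖f z‖ ^ 2) gaussMeasure

/-- The Fock-space inner product `⟨f, g⟩ = ∫ f ḡ dμ`. -/
noncomputable def fockInner (f g : ℂ → ℂ) : ℂ :=
  ∫ z, f z * (starRingEnd ℂ) (g z) ∂gaussMeasure

/-- The weighted composition operator `C_{ψ,φ} f = ψ · (f ∘ φ)`. -/
def wcomp (ψ φ f : ℂ → ℂ) : ℂ → ℂ := fun z => ψ z * f (φ z)

/-- Boundedness of `C_{ψ,φ}` on `F²`. -/
def BoundedWCO (ψ φ : ℂ → ℂ) : Prop :=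
  ∃ C : ℝ, ∀ f, MemFock f →
    MemFock (wcomp ψ φ f) ∧ fockNormSq (wcomp ψ φ f) ≤ C * fockNormSq f

/-- The numerical range `W(C_{ψ,φ}) = {⟨C_{ψ,φ} f, f⟩ : ‖f‖ = 1}` on `F²`. -/
noncomputable def numRange (ψ φ : ℂ → ℂ) : Set ℂ :=
  {w | ∃ f, MemFock f ∧ fockNormSq f = 1 ∧ w = fockInner (wcomp ψ φ f) f}

/-- The point spectrum of `C_{ψ,φ}` on `F²`. -/
def pointSpectrum (ψ φ : ℂ → ℂ) : Set ℂ :=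
  {lam | ∃ f, MemFock f ∧ f ≠ 0 ∧ wcomp ψ φ f = fun z => lam * f z}

/-- Compactness of `C_{ψ,φ}` on `F²`: it is bounded and the image of every sequence in the
unit ball of `F²` has a subsequence which is Cauchy in the `F²` norm. -/
def CompactWCO (ψ φ : ℂ → ℂ) : Prop :=
  BoundedWCO ψ φ ∧ ∀ f : ℕ → ℂ → ℂ, (∀ k, MemFock (f k) ∧ fockNormSq (f k) ≤ 1) →
    ∃ g : ℕ → ℕ, StrictMono g ∧ ∀ ε : ℝ, 0 < ε → ∃ N : ℕ, ∀ i, N ≤ i → ∀ j, N ≤ j →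
      fockNormSq (fun z => wcomp ψ φ (f (g i)) z - wcomp ψ φ (f (g j)) z) < ε

section RankOne

variable {V : Type*} [SeminormedAddCommGroup V] [InnerProductSpace ℂ V]

/-- For a unit vector `f`, the value `⟪v, f⟫ * ⟪f, u⟫` of the quadratic form of a rank-one operator
lies in the filled ellipse with foci `0` and `⟪v, u⟫` and major axis `‖u‖ * ‖v‖`. -/
theorem norm_inner_mul_inner_add_norm_sub_le (u v f : V) (hf : ‖f‖ = 1) :
    ‖inner ℂ v f * inner ℂ f u‖ + ‖inner ℂ v f * inner ℂ f u - inner ℂ v u‖ ≤ ‖u‖ * ‖v‖ := by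
  have hff : inner ℂ f f = (1 : ℂ) := by simp [inner_self_eq_norm_sq_to_K, hf]
  have residual_sq : ∀ x : V, ‖x - inner ℂ f x • f‖ ^ 2 = ‖x‖ ^ 2 - ‖inner ℂ f x‖ ^ 2 := by
    intro x
    have h : inner ℂ (x - inner ℂ f x • f) (x - inner ℂ f x • f)
        = inner ℂ x x - inner ℂ f x * (starRingEnd ℂ) (inner ℂ f x) := by
      simp only [inner_sub_left, inner_sub_right, inner_smul_left, inner_smul_right, hff,
        inner_conj_symm]
      ring
    rw [inner_self_eq_norm_sq_to_K, inner_self_eq_norm_sq_to_K, Complex.mul_conj,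
      Complex.normSq_eq_norm_sq] at h
    change (‖x - inner ℂ f x • f‖ : ℂ) ^ 2 = (‖x‖ : ℂ) ^ 2 - _ at h
    exact_mod_cast h
  have hsub : inner ℂ v f * inner ℂ f u - inner ℂ v u
      = -inner ℂ (v - inner ℂ f v • f) (u - inner ℂ f u • f) := by
    simp only [inner_sub_left, inner_sub_right, inner_smul_left, inner_smul_right, hff,
      inner_conj_symm]
    ring
  have hcs := norm_inner_le_norm (𝕜 := ℂ) (v - inner ℂ f v • f) (u - inner ℂ f u • f)
  rw [hsub, norm_neg, norm_mul, norm_inner_symm v f]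
  refine (add_le_add_right hcs _).trans (abs_le_of_sq_le_sq' ?_ (by positivity)).2
  have hu := residual_sq u
  have hv := residual_sq v
  nlinarith [sq_nonneg (‖inner ℂ f v‖ * ‖u - inner ℂ f u • f‖
    - ‖inner ℂ f u‖ * ‖v - inner ℂ f v • f‖)]

/-- A point of the filled ellipse with foci `0` and `p` and minor axis `q` lies on one of the
circles with centre `t * p` and radius `q * √(t * (1 - t))`. -/
theorem exists_normSq_sub_eq {z p : ℂ} {q S : ℝ} (hS : S ^ 2 = ‖p‖ ^ 2 + q ^ 2)
    (h : ‖z‖ + ‖z - p‖ ≤ S) :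
    ∃ t ∈ Set.Icc (0 : ℝ) 1, ‖z - t * p‖ ^ 2 = q ^ 2 * (t * (1 - t)) := by
  have hz := norm_nonneg z
  have hzp := norm_nonneg (z - p)
  have expand : ∀ t : ℝ, ‖z - t * p‖ ^ 2 - q ^ 2 * (t * (1 - t))
      = S ^ 2 * t ^ 2 - (‖z‖ ^ 2 - ‖z - p‖ ^ 2 + S ^ 2) * t + ‖z‖ ^ 2 := by
    intro t
    rw [hS]
    simp only [Complex.sq_norm, Complex.normSq_apply, Complex.sub_re, Complex.sub_im,
      Complex.re_ofReal_mul, Complex.im_ofReal_mul]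
    ring
  rcases eq_or_lt_of_le (show 0 ≤ S by linarith) with hS0 | hS0
  · refine ⟨0, by simp, ?_⟩
    have : ‖z‖ = 0 := by linarith
    simp [this]
  · have hmem : ‖z‖ / S ∈ Set.Icc (0 : ℝ) 1 :=
      ⟨by positivity, (div_le_one hS0).2 (by linarith)⟩
    have hneg : ‖z - (‖z‖ / S : ℝ) * p‖ ^ 2 - q ^ 2 * (‖z‖ / S * (1 - ‖z‖ / S)) ≤ 0 := by
      rw [expand]
      have : S ^ 2 * (‖z‖ / S) ^ 2 - (‖z‖ ^ 2 - ‖z - p‖ ^ 2 + S ^ 2) * (‖z‖ / S) + ‖z‖ ^ 2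
          = ‖z‖ / S * (‖z - p‖ ^ 2 - (S - ‖z‖) ^ 2) := by
        field_simp
        ring
      rw [this]
      exact mul_nonpos_of_nonneg_of_nonpos hmem.1 (by nlinarith)
    have hcont : ContinuousOn
        (fun t : ℝ => ‖z - t * p‖ ^ 2 - q ^ 2 * (t * (1 - t))) (Set.Icc 0 (‖z‖ / S)) := by
      fun_prop
    obtain ⟨t, ht, ht0⟩ := intermediate_value_Icc' hmem.1 hcont
      (show (0 : ℝ) ∈ Set.Icc _ _ from ⟨hneg, by simp⟩)
    exact ⟨t, ⟨ht.1, ht.2.trans hmem.2⟩, sub_eq_zero.1 ht0⟩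

/-- There is a unit vector `e` orthogonal to `v`, with `⟪e, u⟫` real, that carries the part of `u`
orthogonal to `v`. -/
theorem exists_unit_orthogonal (u v w : V) (hv : ‖v‖ ≠ 0) (hw : ‖w‖ ≠ 0) (hvw : inner ℂ v w = 0) :
    ∃ e : V, ‖e‖ = 1 ∧ inner ℂ v e = 0 ∧
      ∃ q : ℝ, inner ℂ e u = (q : ℂ) ∧ (‖u‖ * ‖v‖) ^ 2 = ‖inner ℂ v u‖ ^ 2 + (q * ‖v‖) ^ 2 := by
  have hvC : (‖v‖ : ℂ) ≠ 0 := by exact_mod_cast hv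
  have hvv : inner ℂ v v = (‖v‖ : ℂ) ^ 2 := inner_self_eq_norm_sq_to_K v
  set a : ℂ := inner ℂ v u / (‖v‖ : ℂ) ^ 2 with ha
  set r : V := u - a • v with hr
  have hvr : inner ℂ v r = 0 := by
    rw [hr, inner_sub_right, inner_smul_right, hvv, ha]
    field_simp
    ring
  have hrv : inner ℂ r v = 0 := by rw [← inner_conj_symm, hvr, map_zero]
  have hu : u = r + a • v := by simp [hr]
  have hru : inner ℂ r u = (‖r‖ : ℂ) ^ 2 := by
    rw [hu, inner_add_right, inner_smul_right, hrv, inner_self_eq_norm_sq_to_K]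
    simp
  have hsq : (‖u‖ * ‖v‖) ^ 2 = ‖inner ℂ v u‖ ^ 2 + (‖r‖ * ‖v‖) ^ 2 := by
    have h1 : ‖u‖ ^ 2 = ‖r‖ ^ 2 + (‖a‖ * ‖v‖) ^ 2 := by
      have h2 : inner ℂ r (a • v) = 0 := by rw [inner_smul_right, hrv, mul_zero]
      have := norm_add_sq_eq_norm_sq_add_norm_sq_of_inner_eq_zero r (a • v) h2
      rw [← hu, norm_smul] at this
      nlinarith
    have h3 : ‖a‖ * ‖v‖ ^ 2 = ‖inner ℂ v u‖ := by
      rw [ha, norm_div, norm_pow, Complex.norm_real, norm_norm]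
      field_simp
    rw [← h3, mul_pow, h1]
    ring
  by_cases hr0 : ‖r‖ = 0
  · have hwr : inner ℂ w r = 0 := by
      have := norm_inner_le_norm (𝕜 := ℂ) w r
      rw [hr0, mul_zero] at this
      exact norm_le_zero_iff.1 this
    have hwv : inner ℂ w v = 0 := by rw [← inner_conj_symm, hvw, map_zero]
    refine ⟨((‖w‖ : ℂ)⁻¹) • w, ?_, by simp [inner_smul_right, hvw], 0, ?_, ?_⟩
    · rw [norm_smul, norm_inv, Complex.norm_real, norm_norm, inv_mul_cancel₀ hw]
    · rw [inner_smul_left, hu, inner_add_right, inner_smul_right, hwr, hwv]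
      simp
    · rw [hsq, hr0]
  · have hrC : (‖r‖ : ℂ) ≠ 0 := by exact_mod_cast hr0
    refine ⟨((‖r‖ : ℂ)⁻¹) • r, ?_, by simp [inner_smul_right, hvr], ‖r‖, ?_, hsq⟩
    · rw [norm_smul, norm_inv, Complex.norm_real, norm_norm, inv_mul_cancel₀ hr0]
    · rw [inner_smul_left, hru, map_inv₀, Complex.conj_ofReal]
      field_simp

/-- The elliptical range theorem for the rank-one operator `f ↦ ⟪v, f⟫ • u`: its numerical range is
the closed filled ellipse with foci `0` and `⟪v, u⟫` and major axis `‖u‖ * ‖v‖`. -/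
theorem exists_unit_inner_mul_inner_eq_iff (u v w : V) (hv : ‖v‖ ≠ 0) (hw : ‖w‖ ≠ 0)
    (hvw : inner ℂ v w = 0) (z : ℂ) :
    (∃ f : V, ‖f‖ = 1 ∧ z = inner ℂ v f * inner ℂ f u) ↔
      ‖z‖ + ‖z - inner ℂ v u‖ ≤ ‖u‖ * ‖v‖ := by
  constructor
  · rintro ⟨f, hf, rfl⟩
    exact norm_inner_mul_inner_add_norm_sub_le u v f hf
  intro hz
  obtain ⟨e, he, hve, q, heu, hsq⟩ := exists_unit_orthogonal u v w hv hw hvw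
  obtain ⟨t, ⟨ht0, ht1⟩, ht⟩ := exists_normSq_sub_eq hsq hz
  obtain ⟨ω, hω, hωz⟩ : ∃ ω : ℂ, ‖ω‖ = 1 ∧
      z - t * inner ℂ v u = ω * (q * ‖v‖ * (√t * √(1 - t)) : ℝ) := by
    set m : ℝ := q * ‖v‖ * (√t * √(1 - t)) with hm
    have hnorm : ‖z - t * inner ℂ v u‖ = |m| := by
      rw [← abs_of_nonneg (norm_nonneg (z - t * inner ℂ v u)), ← sq_eq_sq_iff_abs_eq_abs, ht, hm,
        mul_pow _ (√t * √(1 - t)), mul_pow (√t), Real.sq_sqrt ht0, Real.sq_sqrt (by linarith)]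
    by_cases hm0 : m = 0
    · refine ⟨1, by simp, ?_⟩
      rw [hm0, abs_zero, norm_eq_zero] at hnorm
      simp [hnorm, hm0]
    · have hmC : (m : ℂ) ≠ 0 := by exact_mod_cast hm0
      refine ⟨(z - t * inner ℂ v u) / m, ?_, by field_simp⟩
      rw [norm_div, hnorm, Complex.norm_real, Real.norm_eq_abs, div_self (abs_ne_zero.2 hm0)]
  have hvC : (‖v‖ : ℂ) ≠ 0 := by exact_mod_cast hv
  have hvv : inner ℂ v v = (‖v‖ : ℂ) ^ 2 := inner_self_eq_norm_sq_to_K v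
  have hsqrt : (√t : ℂ) * (√t : ℂ) = t := by exact_mod_cast Real.mul_self_sqrt ht0
  set x : V := ((√t : ℂ) / ‖v‖) • v with hx
  set y : V := ((√(1 - t) : ℂ) * (starRingEnd ℂ) ω) • e with hy
  refine ⟨x + y, ?_, ?_⟩
  · have hxy : inner ℂ x y = 0 := by
      rw [hx, hy, inner_smul_left, inner_smul_right, hve, mul_zero, mul_zero]
    have hsum := norm_add_sq_eq_norm_sq_add_norm_sq_of_inner_eq_zero x y hxy
    have hxn : ‖x‖ = √t := by
      rw [hx, norm_smul, norm_div, Complex.norm_real, Complex.norm_real, norm_norm,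
        div_mul_cancel₀ _ hv, Real.norm_of_nonneg (Real.sqrt_nonneg t)]
    have hyn : ‖y‖ = √(1 - t) := by
      rw [hy, norm_smul, norm_mul, Complex.norm_real, RCLike.norm_conj, hω, he, mul_one, mul_one,
        Real.norm_of_nonneg (Real.sqrt_nonneg _)]
    rw [hxn, hyn, Real.mul_self_sqrt ht0, Real.mul_self_sqrt (by linarith)] at hsum
    nlinarith [norm_nonneg (x + y)]
  · have h1 : inner ℂ v (x + y) = √t * ‖v‖ := by
      rw [inner_add_right, hx, hy, inner_smul_right, inner_smul_right, hve, hvv]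
      field_simp
      ring
    have h2 : inner ℂ (x + y) u = √t / ‖v‖ * inner ℂ v u + √(1 - t) * ω * q := by
      rw [inner_add_left, hx, hy, inner_smul_left, inner_smul_left, heu]
      simp
    rw [h1, h2]
    push_cast at hωz
    have h3 : (√t : ℂ) * ‖v‖ * (√t / ‖v‖ * inner ℂ v u + √(1 - t) * ω * q)
        = (√t * √t) * inner ℂ v u + ω * (q * ‖v‖ * (√t * √(1 - t))) := by
      field_simp
    rw [h3, hsqrt, ← hωz]
    ring

end RankOne

section Gaussian

theorem measurable_gaussDensity :
    Measurable fun z : ℂ => ENNReal.ofReal (Real.exp (-(‖z‖ ^ 2)) / Real.pi) := by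
  fun_prop

theorem toReal_gaussDensity (z : ℂ) :
    (ENNReal.ofReal (Real.exp (-(‖z‖ ^ 2)) / Real.pi)).toReal
      = Real.exp (-(‖z‖ ^ 2)) / Real.pi :=
  ENNReal.toReal_ofReal (by positivity)

theorem integral_gaussMeasure {E : Type*} [NormedAddCommGroup E] [NormedSpace ℝ E] (g : ℂ → E) :
    ∫ z, g z ∂gaussMeasure = ∫ z, (Real.exp (-(‖z‖ ^ 2)) / Real.pi) • g z := by
  rw [gaussMeasure, integral_withDensity_eq_integral_toReal_smul measurable_gaussDensity
    (by simp)]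
  simp only [toReal_gaussDensity]

theorem integrable_gaussMeasure_iff {E : Type*} [NormedAddCommGroup E] [NormedSpace ℝ E]
    (g : ℂ → E) :
    Integrable g gaussMeasure ↔
      Integrable (fun z => (Real.exp (-(‖z‖ ^ 2)) / Real.pi) • g z) := by
  rw [gaussMeasure, integrable_withDensity_iff_integrable_smul' measurable_gaussDensity
    (by simp)]
  simp only [toReal_gaussDensity]

theorem integrable_exp_neg_norm_sq : Integrable fun z : ℂ => Real.exp (-(‖z‖ ^ 2)) := by
  have h := (GaussianFourier.integrable_cexp_neg_mul_sq_norm_add (V := ℂ) (b := 1) (by simp)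
    0 0).norm
  refine h.congr (Filter.Eventually.of_forall fun z => ?_)
  simp [Complex.norm_exp, ← Complex.ofReal_pow]

instance isProbabilityMeasure_gaussMeasure : IsProbabilityMeasure gaussMeasure := by
  refine ⟨?_⟩
  have h := integral_gaussMeasure (fun _ : ℂ => (1 : ℝ))
  have hint : Integrable (fun _ : ℂ => (1 : ℝ)) gaussMeasure := by
    rw [integrable_gaussMeasure_iff]
    simpa using integrable_exp_neg_norm_sq.div_const Real.pi
  have hone : ∫ z : ℂ, (Real.exp (-(‖z‖ ^ 2)) / Real.pi) • (1 : ℝ) = 1 := by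
    have h2 := Complex.integral_rpow_mul_exp_neg_rpow (p := 2) (q := 0) (by norm_num) (by norm_num)
    simp only [Real.rpow_zero, one_mul, Real.rpow_two] at h2
    simp only [smul_eq_mul, mul_one, integral_div]
    rw [h2]
    norm_num [Real.Gamma_one, Real.pi_ne_zero]
  rw [hone, integral_const, smul_eq_mul, mul_one] at h
  rwa [Measure.real, ENNReal.toReal_eq_one_iff] at h

theorem measurePreserving_mul_gaussMeasure (a : Circle) :
    MeasurePreserving (fun z : ℂ => (a : ℂ) * z) gaussMeasure gaussMeasure := by
  have hvol : MeasurePreserving (fun z : ℂ => (a : ℂ) * z) volume volume :=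
    (rotation a).measurePreserving
  refine ⟨hvol.measurable, ?_⟩
  ext s hs
  rw [Measure.map_apply hvol.measurable hs, gaussMeasure,
    withDensity_apply _ (hvol.measurable hs), withDensity_apply _ hs,
    ← hvol.setLIntegral_comp_preimage hs measurable_gaussDensity]
  simp only [norm_mul, Circle.norm_coe, one_mul]

/-- The mean value property of entire functions with respect to the Gaussian measure. -/
theorem integral_gaussMeasure_of_differentiable {g : ℂ → ℂ} (hg : Differentiable ℂ g)
    (hint : Integrable g gaussMeasure) : ∫ z, g z ∂gaussMeasure = g 0 := by
  have hrot : ∀ θ : ℝ, MeasurePreserving (fun z : ℂ => Complex.exp (θ * Complex.I) * z)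
      gaussMeasure gaussMeasure := by
    intro θ
    simpa using measurePreserving_mul_gaussMeasure (Circle.exp θ)
  have hemb : ∀ θ : ℝ, MeasurableEmbedding fun z : ℂ => Complex.exp (θ * Complex.I) * z :=
    fun θ => (Homeomorph.mulLeft₀ _ (Complex.exp_ne_zero _)).measurableEmbedding
  have hcont : Continuous
      (Function.uncurry fun (θ : ℝ) (z : ℂ) => g (Complex.exp (θ * Complex.I) * z)) := by
    have := hg.continuous
    unfold Function.uncurry
    fun_prop
  have hprod : Integrable
      (Function.uncurry fun (θ : ℝ) (z : ℂ) => g (Complex.exp (θ * Complex.I) * z))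
      ((volume.restrict (Set.uIoc 0 (2 * Real.pi))).prod gaussMeasure) := by
    rw [integrable_prod_iff hcont.aestronglyMeasurable]
    refine ⟨Filter.Eventually.of_forall fun θ => (hrot θ).integrable_comp_of_integrable hint, ?_⟩
    have : ∀ θ : ℝ, ∫ z, ‖g (Complex.exp (θ * Complex.I) * z)‖ ∂gaussMeasure
        = ∫ z, ‖g z‖ ∂gaussMeasure :=
      fun θ => (hrot θ).integral_comp (hemb θ) fun z => ‖g z‖
    simp only [Function.uncurry, this]
    rw [Set.uIoc_of_le (by positivity)]
    exact integrable_const _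
  have hswap := intervalIntegral_integral_swap hprod
  have hmean : ∀ z : ℂ, ∫ θ in (0 : ℝ)..2 * Real.pi, g (Complex.exp (θ * Complex.I) * z)
      = (2 * Real.pi : ℝ) • g 0 := by
    intro z
    have h := (hg.comp (differentiable_id.mul_const z)).diffContOnCl.circleAverage
      (c := 0) (R := 1)
    rw [Real.circleAverage_def, inv_smul_eq_iff₀ (by positivity)] at h
    simpa [circleMap] using h
  have hleft : ∀ θ : ℝ, ∫ z, g (Complex.exp (θ * Complex.I) * z) ∂gaussMeasure
      = ∫ z, g z ∂gaussMeasure :=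
    fun θ => (hrot θ).integral_comp (hemb θ) g
  simp only [hmean, hleft, intervalIntegral.integral_const, sub_zero, integral_const,
    probReal_univ, one_smul] at hswap
  exact smul_right_injective ℂ (show 2 * Real.pi ≠ 0 by positivity) hswap

end Gaussian

section Fock

/-- The reproducing kernel of the Fock space at `b`. -/
noncomputable def fockKernel (b : ℂ) : ℂ → ℂ := fun z => Complex.exp ((starRingEnd ℂ) b * z)

theorem memFock_fockKernel (b : ℂ) : MemFock (fockKernel b) := by
  refine ⟨by unfold Entire fockKernel; fun_prop, ?_⟩
  rw [integrable_gaussMeasure_iff]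
  have h := ((integrable_exp_neg_norm_sq.comp_sub_right b).const_mul
    (Real.exp (‖b‖ ^ 2) / Real.pi))
  refine h.congr (Filter.Eventually.of_forall fun z => ?_)
  simp only [fockKernel, Complex.norm_exp, smul_eq_mul, ← Real.exp_nat_mul]
  rw [div_mul_eq_mul_div, div_mul_eq_mul_div, ← Real.exp_add, ← Real.exp_add]
  congr 2
  simp only [Complex.sq_norm, Complex.normSq_apply, Complex.sub_re, Complex.sub_im,
    Complex.mul_re, Complex.conj_re, Complex.conj_im]
  push_cast
  ring

theorem MemFock.memLp {f : ℂ → ℂ} (hf : MemFock f) : MemLp f 2 gaussMeasure :=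
  (memLp_two_iff_integrable_sq_norm hf.1.continuous.aestronglyMeasurable).2 hf.2

theorem MemFock.integrable_mul_conj {f g : ℂ → ℂ} (hf : MemFock f) (hg : MemFock g) :
    Integrable (fun z => f z * (starRingEnd ℂ) (g z)) gaussMeasure :=
  hf.memLp.integrable_mul hg.memLp.star

/-- The reproducing property of the Fock kernel. -/
theorem fockInner_fockKernel {f : ℂ → ℂ} (hf : MemFock f) (b : ℂ) :
    fockInner f (fockKernel b) = f b := by
  have hint := hf.integrable_mul_conj (memFock_fockKernel b)
  set g : ℂ → ℂ := fun w => f (w + b) * Complex.exp (-((starRingEnd ℂ) b * w)) with hg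
  have hgd : Differentiable ℂ g := by
    have : Differentiable ℂ f := hf.1
    fun_prop
  have hshift : ∀ w : ℂ, (Real.exp (-(‖w‖ ^ 2)) / Real.pi) • g w
      = (Real.exp (-(‖w + b‖ ^ 2)) / Real.pi) •
        (f (w + b) * (starRingEnd ℂ) (fockKernel b (w + b))) := by
    intro w
    simp only [hg, fockKernel, Complex.real_smul, ← Complex.exp_conj]
    push_cast
    have h : Complex.exp (-(‖w‖ : ℂ) ^ 2) * Complex.exp (-((starRingEnd ℂ) b * w))
        = Complex.exp (-(‖w + b‖ : ℂ) ^ 2) *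
          Complex.exp ((starRingEnd ℂ) ((starRingEnd ℂ) b * (w + b))) := by
      rw [← Complex.exp_add, ← Complex.exp_add, ← Complex.conj_mul', ← Complex.conj_mul']
      congr 1
      simp only [map_mul, map_add, Complex.conj_conj]
      ring
    linear_combination (f (w + b) / Real.pi) * h
  have hgint : Integrable g gaussMeasure := by
    rw [integrable_gaussMeasure_iff] at hint ⊢
    simp only [hshift]
    exact hint.comp_add_right b
  have h0 := integral_gaussMeasure_of_differentiable hgd hgint
  rw [integral_gaussMeasure] at h0
  simp only [hshift] at h0
  rw [integral_add_right_eq_self (fun z => (Real.exp (-(‖z‖ ^ 2)) / Real.pi) •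
        (f z * (starRingEnd ℂ) (fockKernel b z))) b, ← integral_gaussMeasure] at h0
  simpa [fockInner, hg] using h0

theorem fockInner_self (f : ℂ → ℂ) : fockInner f f = (fockNormSq f : ℂ) := by
  rw [fockInner, fockNormSq, ← integral_complex_ofReal]
  simp [Complex.mul_conj']

theorem fockNormSq_nonneg (f : ℂ → ℂ) : 0 ≤ fockNormSq f :=
  integral_nonneg fun _ => by positivity

theorem conj_fockInner (f g : ℂ → ℂ) : (starRingEnd ℂ) (fockInner f g) = fockInner g f := by
  rw [fockInner, fockInner, ← integral_conj]
  simp [mul_comm]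

theorem fockInner_const_mul_left (a : ℂ) (f g : ℂ → ℂ) :
    fockInner (fun z => a * f z) g = a * fockInner f g := by
  simp only [fockInner, mul_assoc, integral_const_mul]

/-- The Fock space as a space of functions. -/
def fockSpace : Submodule ℂ (ℂ → ℂ) where
  carrier := {f | MemFock f}
  add_mem' {f g} hf hg := by
    have hd : Entire (f + g) := Differentiable.add hf.1 hg.1
    exact ⟨hd, (memLp_two_iff_integrable_sq_norm hd.continuous.aestronglyMeasurable).1
      (hf.memLp.add hg.memLp)⟩
  zero_mem' := ⟨differentiable_const 0, by simp⟩
  smul_mem' a f hf := by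
    have hd : Entire (a • f) := Differentiable.const_smul hf.1 a
    exact ⟨hd, (memLp_two_iff_integrable_sq_norm hd.continuous.aestronglyMeasurable).1
      (hf.memLp.const_smul a)⟩

/-- The inner product of the Fock space, conjugate-linear in the first variable. -/
@[reducible]
noncomputable def fockCore : PreInnerProductSpace.Core ℂ fockSpace where
  inner f g := fockInner g f
  conj_inner_symm f g := conj_fockInner _ _
  re_inner_nonneg f := by
    rw [fockInner_self]
    exact fockNormSq_nonneg _
  add_left f g h := by
    have hf := h.2.integrable_mul_conj f.2
    have hg := h.2.integrable_mul_conj g.2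
    simp only [fockInner, Submodule.coe_add, Pi.add_apply, map_add, mul_add]
    exact integral_add hf hg
  smul_left f g a := by
    simp only [fockInner, Submodule.coe_smul, Pi.smul_apply, smul_eq_mul, map_mul]
    rw [← integral_const_mul]
    congr 1
    ext z
    ring

noncomputable instance : SeminormedAddCommGroup fockSpace :=
  InnerProductSpace.Core.toSeminormedAddCommGroup (𝕜 := ℂ) (c := fockCore)

noncomputable instance : InnerProductSpace ℂ fockSpace :=
  InnerProductSpace.ofCore fockCore

theorem fockSpace_inner_eq (f g : fockSpace) : inner ℂ f g = fockInner g f := rfl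

theorem fockSpace_norm_sq (f : fockSpace) : ‖f‖ ^ 2 = fockNormSq f := by
  rw [norm_sq_eq_re_inner (𝕜 := ℂ), fockSpace_inner_eq, fockInner_self]
  rfl

theorem fockSpace_norm (f : fockSpace) : ‖f‖ = √(fockNormSq f) := by
  rw [← fockSpace_norm_sq, Real.sqrt_sq (norm_nonneg f)]

theorem norm_fockKernel (b : ℂ) :
    ‖(⟨fockKernel b, memFock_fockKernel b⟩ : fockSpace)‖ = Real.exp (‖b‖ ^ 2 / 2) := by
  have h : (fockNormSq (fockKernel b) : ℂ) = (Real.exp (‖b‖ ^ 2) : ℝ) := by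
    rw [← fockInner_self, fockInner_fockKernel (memFock_fockKernel b)]
    simp [fockKernel, Complex.conj_mul']
  rw [fockSpace_norm, Complex.ofReal_injective h, Real.exp_half]

/-- The Fock space contains a nonzero function that vanishes at `b`. -/
theorem exists_fockSpace_apply_eq_zero (b : ℂ) : ∃ w : fockSpace, ‖w‖ ≠ 0 ∧ w.1 b = 0 := by
  set k : ℂ → fockSpace := fun a => ⟨fockKernel a, memFock_fockKernel a⟩ with hk
  set w : fockSpace := fockKernel b b • k (b + 1) - fockKernel (b + 1) b • k b with hw
  have happ : ∀ z, w.1 z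
      = fockKernel b b * fockKernel (b + 1) z - fockKernel (b + 1) b * fockKernel b z :=
    fun z => rfl
  refine ⟨w, fun h0 => ?_, by rw [happ]; ring⟩
  have hval : w.1 (b + 1) = 0 := by
    have h := norm_inner_le_norm (𝕜 := ℂ) (k (b + 1)) w
    rw [h0, mul_zero, fockSpace_inner_eq, hk, fockInner_fockKernel w.2] at h
    exact norm_le_zero_iff.1 h
  rw [happ, sub_eq_zero] at hval
  simp only [fockKernel, ← Complex.exp_add] at hval
  have hnorm := congrArg (fun x => Real.log ‖x‖) hval
  simp only [Complex.norm_exp, Real.log_exp] at hnorm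
  simp at hnorm
  nlinarith

/-- The numerical range of a weighted composition operator with constant symbol `b` is the closed
filled ellipse with foci `0` and `ψ b` and major axis `‖ψ‖ * exp (‖b‖ ^ 2 / 2)`. -/
theorem mem_numRange_const_iff {ψ : ℂ → ℂ} (hψ : MemFock ψ) (b z : ℂ) :
    z ∈ numRange ψ (fun _ => b) ↔
      ‖z‖ + ‖z - ψ b‖ ≤ √(fockNormSq ψ) * Real.exp (‖b‖ ^ 2 / 2) := by
  obtain ⟨w, hw, hwb⟩ := exists_fockSpace_apply_eq_zero b
  have key := exists_unit_inner_mul_inner_eq_iff (⟨ψ, hψ⟩ : fockSpace)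
    ⟨fockKernel b, memFock_fockKernel b⟩ w (by rw [norm_fockKernel]; positivity) hw
    (by rw [fockSpace_inner_eq, fockInner_fockKernel w.2, hwb]) z
  rw [norm_fockKernel, fockSpace_norm, fockSpace_inner_eq, fockInner_fockKernel hψ] at key
  rw [← key]
  have hval : ∀ f : ℂ → ℂ, fockInner (wcomp ψ (fun _ => b) f) f = f b * fockInner ψ f := by
    intro f
    rw [← fockInner_const_mul_left]
    congr 1
    ext z
    rw [wcomp, mul_comm]
  constructor
  · rintro ⟨f, hf, hf1, rfl⟩
    refine ⟨⟨f, hf⟩, by rw [fockSpace_norm, hf1, Real.sqrt_one], ?_⟩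
    rw [fockSpace_inner_eq, fockSpace_inner_eq, fockInner_fockKernel hf, hval]
  · rintro ⟨f, hf1, rfl⟩
    refine ⟨f, f.2, by rw [← fockSpace_norm_sq, hf1, one_pow], ?_⟩
    rw [fockSpace_inner_eq, fockSpace_inner_eq, fockInner_fockKernel f.2, hval]

theorem memFock_of_boundedWCO_const {ψ : ℂ → ℂ} {b : ℂ} (h : BoundedWCO ψ fun _ => b) :
    MemFock ψ := by
  obtain ⟨C, hC⟩ := h
  have h := (hC _ (memFock_fockKernel 0)).1
  have heq : wcomp ψ (fun _ => b) (fockKernel 0) = ψ := by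
    ext z
    simp [wcomp, fockKernel]
  rwa [heq] at h

/-- A filled ellipse whose major axis is the distance of its foci is a segment. -/
theorem norm_add_norm_sub_le_iff_mem_segment (z p : ℂ) :
    ‖z‖ + ‖z - p‖ ≤ ‖p‖ ↔ z ∈ segment ℝ 0 p := by
  rw [mem_segment_iff_wbtw, ← dist_add_dist_eq_iff, dist_zero_left, dist_zero_left, dist_eq_norm]
  refine ⟨fun h => le_antisymm h ?_, le_of_eq⟩
  simpa using norm_sub_le z (z - p)

end Fock

/-- Remark 2.4: for constant symbol `φ ≡ b` and nonzero entire `ψ` with `C_{ψ,φ}` bounded,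
`C_{ψ,φ}` is the rank-one operator `f ↦ ⟨f, K_b⟩ψ` and `0 ∈ W(C_{ψ,φ})`. Moreover:
(a) if `K_b = (c/‖ψ‖²)ψ` for some `c ≠ 0` then `W(C_{ψ,φ})` is the segment from `0` to `c̄`;
(b) if `K_b ⊥ ψ` then `W(C_{ψ,φ})` is the closed disk of radius `(‖ψ‖/2)e^{|b|²/2}` about `0`;
(c) otherwise `W(C_{ψ,φ})` is a closed filled ellipse with foci `0` and `ψ(b)`. -/
theorem numRange_constant_symbol
    (b : ℂ) (ψ : ℂ → ℂ) (hψ : Entire ψ) (hψ0 : ψ ≠ 0)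
    (φ : ℂ → ℂ) (hφ : φ = fun _ => b)
    (hbdd : BoundedWCO ψ φ)
    (K : ℂ → ℂ) (hK : K = fun z => Complex.exp ((starRingEnd ℂ) b * z)) :
    (∀ f : ℂ → ℂ, MemFock f → wcomp ψ φ f = fun z => fockInner f K * ψ z) ∧
    (0 : ℂ) ∈ numRange ψ φ ∧
    (∀ c : ℂ, c ≠ 0 → K = (fun z => c / (fockNormSq ψ : ℂ) * ψ z) →
      numRange ψ φ = segment ℝ (0 : ℂ) ((starRingEnd ℂ) c)) ∧
    (fockInner K ψ = 0 →
      numRange ψ φ =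
        Metric.closedBall (0 : ℂ) (Real.sqrt (fockNormSq ψ) / 2 * Real.exp (‖b‖ ^ 2 / 2))) ∧
    ((¬∃ c : ℂ, c ≠ 0 ∧ K = fun z => c / (fockNormSq ψ : ℂ) * ψ z) → fockInner K ψ ≠ 0 →
      ∃ s : ℝ, ‖ψ b‖ ≤ s ∧
        numRange ψ φ = {z : ℂ | dist z 0 + dist z (ψ b) ≤ s}) := by
  subst hφ
  change K = fockKernel b at hK
  subst hK
  have hψF := memFock_of_boundedWCO_const hbdd
  have hW := mem_numRange_const_iff hψF b
  have hbK : fockInner ψ (fockKernel b) = ψ b := fockInner_fockKernel hψF b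
  have hle : ‖ψ b‖ ≤ √(fockNormSq ψ) * Real.exp (‖b‖ ^ 2 / 2) := by
    have h := norm_inner_le_norm (𝕜 := ℂ) (⟨ψ, hψF⟩ : fockSpace)
      ⟨fockKernel b, memFock_fockKernel b⟩
    rwa [norm_inner_symm, fockSpace_inner_eq, hbK, fockSpace_norm, norm_fockKernel] at h
  refine ⟨fun f hf => ?_, ?_, fun c hc hKc => ?_, fun horth => ?_, fun _ _ => ?_⟩
  · ext z
    rw [fockInner_fockKernel hf, wcomp, mul_comm]
  · rw [hW]
    simpa using hle
  · have hval : fockKernel b b = (Real.exp (‖b‖ ^ 2 / 2) : ℂ) ^ 2 := by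
      rw [← Complex.ofReal_pow, ← Real.exp_nat_mul]
      simp [fockKernel, Complex.conj_mul', mul_div_cancel₀]
    have hN : fockNormSq ψ ≠ 0 := by
      intro hN
      have h := congrFun hKc 0
      simp [hN, fockKernel] at h
    have hNC : (fockNormSq ψ : ℂ) ≠ 0 := by exact_mod_cast hN
    have hψb : ψ b = (starRingEnd ℂ) c := by
      rw [← hbK, hKc, ← conj_fockInner, fockInner_const_mul_left, fockInner_self,
        div_mul_cancel₀ _ hNC]
    have hs : √(fockNormSq ψ) * Real.exp (‖b‖ ^ 2 / 2) = ‖(starRingEnd ℂ) c‖ := by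
      have h := congrFun hKc b
      rw [hψb, hval, div_mul_eq_mul_div, Complex.mul_conj', eq_div_iff hNC] at h
      have h' : Real.exp (‖b‖ ^ 2 / 2) ^ 2 * fockNormSq ψ = ‖c‖ ^ 2 := by exact_mod_cast h
      rw [RCLike.norm_conj, ← sq_eq_sq₀ (by positivity) (norm_nonneg c), mul_pow,
        Real.sq_sqrt (fockNormSq_nonneg ψ), mul_comm, h']
    ext z
    rw [hW, hs, hψb, norm_add_norm_sub_le_iff_mem_segment]
  · have hψb : ψ b = 0 := by rw [← hbK, ← conj_fockInner, horth, map_zero]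
    ext z
    rw [hW, hψb, sub_zero, mem_closedBall_zero_iff]
    constructor <;> intro h <;> linarith
  · refine ⟨_, hle, ?_⟩
    ext z
    rw [hW, Set.mem_ofPred_eq, dist_zero_right, dist_eq_norm]
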